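/- Let a, b be real numbers with a < 1/2 and b > 0, and let n, m be natural numbers with n + m < 2(a + b) − 1. Assume 2(a+b) − j ≠ 0 for every odd integer j with 1 ≤ |j| ≤ 2·max(n,m) + 1. Then, with the initial vector (p,q,r,s) = (1, 1, −2a−2b+2, −2a), ∫_{−∞}^{∞} |x|^{−2a} (1 + x²)^{−b} · S̄_n(1,1,−2a−2b+2,−2a;x) · S̄_m(1,1,−2a−2b+2,−2a;x) dx = δ_{n,m} · (−1)^n · (∏_{i=1}^{n} [ (i − (1−(−1)^i)a)(i − (1−(−1)^i)a − 2b) / ((2i − 2a − 2b + 1)(2i − 2a − 2b − 1)) ]) · Γ(b + a − 1/2)Γ(1/2 − a)/Γ(b), where δ_{n,m} is 1 if n = m and 0 otherwise. In particular, the finite family {S̄_n(1,1,−2a−2b+2,−2a;·)}_{n=0}^{N} with N ≤ a + b − 1/2 is orthogonal with respect to the weight |x|^{−2a}(1+x²)^{−b} on (−∞,∞). -/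

import Mathlib

open Finset Real MeasureTheory

/-- The basic class of symmetric orthogonal polynomials `S_n(p,q,r,s;x)`. -/
noncomputable def S (p q r s : ℝ) (n : ℕ) (x : ℝ) : ℝ :=
  ∑ k ∈ Finset.range (n / 2 + 1),
    (Nat.choose (n / 2) k : ℝ) *
      (∏ i ∈ Finset.range (n / 2 - k),
        ((2 * (i : ℝ) + (-1 : ℝ) ^ (n + 1) + 2 * ((n / 2 : ℕ) : ℝ)) * p + r) /
        ((2 * (i : ℝ) + (-1 : ℝ) ^ (n + 1) + 2) * q + s)) *
      x ^ (n - 2 * k)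

/-- The monic normalization `S̄_n(p,q,r,s;x)`. -/
noncomputable def Sbar (p q r s : ℝ) (n : ℕ) (x : ℝ) : ℝ :=
  (∏ i ∈ Finset.range (n / 2),
    ((2 * (i : ℝ) + (-1 : ℝ) ^ (n + 1) + 2) * q + s) /
    ((2 * (i : ℝ) + (-1 : ℝ) ^ (n + 1) + 2 * ((n / 2 : ℕ) : ℝ)) * p + r)) *
    S p q r s n x

open Polynomial
open ProbabilityTheory (beta)

/-!
The substitution `t = x²` carries `|x|^(-2a) (1 + x²)^(-b) dx` to the beta prime weight
`t^(α-1) (1+t)^(-(α+β)) dt` on `(0, ∞)`, with `α = 1/2 - a` and `β = a + b - 1/2`. For `e ∈ {0, 1}`,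
`S̄_{2N+e}(x) = x^e Q_N(x²)`, where `Q_N` is the monic multiple of `₂F₁(-N, N-β; α; -t)` for the
parameters `α + e`, `β - e`. Polynomials of opposite parity are orthogonal by symmetry.

Multiplying the beta prime weight by `t^l (1+t)^j` only shifts its parameters, so pairing
`₂F₁(-N, N-β; α; -t)` with `(1+t)^j` produces a Chu–Vandermonde sum, equal to `(-j)_N` up to Gamma
factors. It vanishes for `j < N`, which is orthogonality, and `j = N` gives the norm. The ratio of
consecutive norms is minus a coefficient of the three-term recurrence, so the norms telescope to the
stated product.
-/

theorem ascPochhammer_eval_add {R : Type*} [CommSemiring R] (x y : R) (n : ℕ) :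
    (ascPochhammer R n).eval (x + y) = ∑ ij ∈ antidiagonal n,
      (n.choose ij.1 : R) * ((ascPochhammer R ij.1).eval x * (ascPochhammer R ij.2).eval y) := by
  induction n with
  | zero => simp
  | succ n ih =>
    rw [ascPochhammer_succ_eval, ih, sum_mul, sum_antidiagonal_choose_succ_mul
      (fun i j => (ascPochhammer R i).eval x * (ascPochhammer R j).eval y), ← sum_add_distrib]
    refine sum_congr rfl fun ij hij => ?_
    have hn : ij.1 + ij.2 = n := mem_antidiagonal.1 hij
    rw [Nat.choose_symm_of_eq_add hn.symm, ascPochhammer_succ_eval, ascPochhammer_succ_eval, ← hn]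
    push_cast
    ring

theorem Gamma_add_natCast {x : ℝ} {n : ℕ} (hx : ∀ k < n, x + k ≠ 0) :
    Gamma (x + n) = (ascPochhammer ℝ n).eval x * Gamma x := by
  induction n with
  | zero => simp
  | succ n ih =>
    rw [Nat.cast_succ, ← add_assoc, Gamma_add_one (hx n n.lt_succ_self),
      ih fun k hk => hx k (hk.trans n.lt_succ_self), ascPochhammer_succ_eval]
    ring

theorem sum_choose_mul_ascPochhammer_mul_Gamma (x : ℝ) {y : ℝ} (hy : 0 < y) (N : ℕ) :
    ∑ l ∈ range (N + 1), N.choose l * (ascPochhammer ℝ l).eval x * Gamma (y + (N - l)) =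
      (ascPochhammer ℝ N).eval (x + y) * Gamma y := by
  rw [ascPochhammer_eval_add, Nat.sum_antidiagonal_eq_sum_range_succ_mk, sum_mul]
  refine sum_congr rfl fun l hl => ?_
  rw [← Nat.cast_sub (mem_range_succ_iff.1 hl), Gamma_add_natCast fun _ _ => by positivity]
  ring

theorem setIntegral_Ioo_rpow_mul_one_sub_rpow {u v : ℝ} (hu : 0 < u) (hv : 0 < v) :
    ∫ x in Set.Ioo (0 : ℝ) 1, x ^ (u - 1) * (1 - x) ^ (v - 1) = beta u v := by
  rw [ProbabilityTheory.beta_eq_betaIntegralReal u v hu hv, Complex.betaIntegral,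
    intervalIntegral.integral_of_le zero_le_one, integral_Ioc_eq_integral_Ioo,
    ← Complex.ofReal_re (∫ x in Set.Ioo (0 : ℝ) 1, x ^ (u - 1) * (1 - x) ^ (v - 1)),
    ← integral_complex_ofReal]
  congr 1
  refine setIntegral_congr_fun measurableSet_Ioo fun x hx => ?_
  simp [Complex.ofReal_cpow hx.1.le, Complex.ofReal_cpow (sub_pos.2 hx.2).le]

/-- The density on `(0, ∞)` of the unnormalised beta prime distribution with parameters `α`, `β`. -/
noncomputable def betaPrimeWeight (α β t : ℝ) : ℝ :=
  t ^ (α - 1) * (1 + t) ^ (-(α + β))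

theorem image_div_one_add_Ioi : (fun t : ℝ => t / (1 + t)) '' Set.Ioi 0 = Set.Ioo 0 1 := by
  ext y
  constructor
  · rintro ⟨t, ht : 0 < t, rfl⟩
    exact ⟨by positivity, (div_lt_one (by positivity)).2 (by linarith)⟩
  · rintro ⟨h0, h1⟩
    have : 0 < 1 - y := sub_pos.2 h1
    exact ⟨y / (1 - y), div_pos h0 this, by field_simp; ring⟩

theorem hasDerivAt_div_one_add {t : ℝ} (ht : 1 + t ≠ 0) :
    HasDerivAt (fun t : ℝ => t / (1 + t)) ((1 + t) ^ 2)⁻¹ t :=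
  ((hasDerivAt_id t).fun_div ((hasDerivAt_id t).const_add 1) ht).congr_deriv (by simp)

theorem monotoneOn_div_one_add : MonotoneOn (fun t : ℝ => t / (1 + t)) (Set.Ioi (-1)) := by
  intro s (hs : -1 < s) t (ht : -1 < t) hst
  exact (div_le_div_iff₀ (by linarith) (by linarith)).2 (by linarith)

theorem integral_betaPrimeWeight {α β : ℝ} (hα : 0 < α) (hβ : 0 < β) :
    ∫ t in Set.Ioi 0, betaPrimeWeight α β t = beta α β := by
  rw [← setIntegral_Ioo_rpow_mul_one_sub_rpow hα hβ, ← image_div_one_add_Ioi,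
    integral_image_eq_integral_deriv_smul_of_monotoneOn measurableSet_Ioi
      (fun t (ht : 0 < t) => (hasDerivAt_div_one_add (by positivity)).hasDerivWithinAt)
      (monotoneOn_div_one_add.mono (Set.Ioi_subset_Ioi (by norm_num)))]
  refine setIntegral_congr_fun measurableSet_Ioi fun t (ht : 0 < t) => ?_
  have ht' : 0 < 1 + t := by positivity
  have hsub : 1 - t / (1 + t) = (1 + t)⁻¹ := by field_simp; ring
  rw [betaPrimeWeight, smul_eq_mul, hsub, div_rpow ht.le ht'.le, inv_rpow ht'.le,
    show -(α + β) = -(2 : ℕ) - (α - 1) - (β - 1) by push_cast; ring,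
    rpow_sub ht', rpow_sub ht', rpow_neg ht'.le, rpow_natCast]
  ring

theorem betaPrimeWeight_mul_pow_mul_pow (α β : ℝ) (k j : ℕ) {t : ℝ} (ht : 0 < t) :
    betaPrimeWeight α β t * (t ^ k * (1 + t) ^ j) = betaPrimeWeight (α + k) (β - k - j) t := by
  have ht' : 0 < 1 + t := by positivity
  rw [betaPrimeWeight, betaPrimeWeight, show α + k - 1 = α - 1 + k by ring,
    show -(α + k + (β - k - j)) = -(α + β) + j by ring, rpow_add_natCast ht.ne',
    rpow_add_natCast ht'.ne']
  ring

theorem integral_betaPrimeWeight_mul_pow_mul_pow {α β : ℝ} (hα : 0 < α) {k j : ℕ}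
    (h : (k + j : ℝ) < β) :
    ∫ t in Set.Ioi 0, betaPrimeWeight α β t * (t ^ k * (1 + t) ^ j) =
      beta (α + k) (β - k - j) := by
  rw [← integral_betaPrimeWeight (by positivity) (by linarith)]
  exact setIntegral_congr_fun measurableSet_Ioi fun _ => betaPrimeWeight_mul_pow_mul_pow α β k j

theorem integrableOn_betaPrimeWeight_mul_pow_mul_pow {α β : ℝ} (hα : 0 < α) {k j : ℕ}
    (h : (k + j : ℝ) < β) :
    IntegrableOn (fun t => betaPrimeWeight α β t * (t ^ k * (1 + t) ^ j)) (Set.Ioi 0) := by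
  refine .of_integral_ne_zero ?_
  rw [integral_betaPrimeWeight_mul_pow_mul_pow hα h]
  exact (ProbabilityTheory.beta_pos (by positivity) (by linarith)).ne'

theorem integrableOn_betaPrimeWeight_mul_eval {α β : ℝ} (hα : 0 < α) {P : ℝ[X]}
    (hP : (P.natDegree : ℝ) < β) :
    IntegrableOn (fun t => betaPrimeWeight α β t * P.eval t) (Set.Ioi 0) := by
  simp only [eval_eq_sum_range, mul_sum, mul_left_comm (betaPrimeWeight α β _)]
  refine integrable_finsetSum _ fun k hk => Integrable.const_mul ?_ _
  have hk : (k : ℝ) ≤ P.natDegree := mod_cast mem_range_succ_iff.1 hk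
  simpa only [IntegrableOn, pow_zero, mul_one] using
    integrableOn_betaPrimeWeight_mul_pow_mul_pow hα (j := 0) (by push_cast; linarith)

section BetaPrimePoly

variable (α β : ℝ) (N : ℕ)

/-- The hypergeometric polynomial `₂F₁(-N, N - β; α; -t)`, orthogonal with respect to
`betaPrimeWeight α β`. -/
noncomputable def betaPrimePoly : ℝ[X] :=
  ∑ l ∈ range (N + 1),
    C (N.choose l * (ascPochhammer ℝ l).eval (N - β) / (ascPochhammer ℝ l).eval α) * X ^ l

theorem natDegree_betaPrimePoly_le : (betaPrimePoly α β N).natDegree ≤ N :=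
  natDegree_sum_le_of_forall_le _ _ fun _ hl =>
    (natDegree_C_mul_X_pow_le _ _).trans (mem_range_succ_iff.1 hl)

theorem coeff_betaPrimePoly_self : (betaPrimePoly α β N).coeff N =
    (ascPochhammer ℝ N).eval (N - β) / (ascPochhammer ℝ N).eval α := by
  simp [betaPrimePoly, coeff_C_mul, coeff_X_pow]

theorem eval_betaPrimePoly (t : ℝ) : (betaPrimePoly α β N).eval t = ∑ l ∈ range (N + 1),
    N.choose l * (ascPochhammer ℝ l).eval (N - β) / (ascPochhammer ℝ l).eval α * t ^ l := by
  simp [betaPrimePoly, eval_finsetSum]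

end BetaPrimePoly

theorem integral_betaPrimeWeight_mul_betaPrimePoly_mul_pow {α β : ℝ} (hα : 0 < α) {N j : ℕ}
    (h : (N + j : ℝ) < β) :
    ∫ t in Set.Ioi 0, betaPrimeWeight α β t * ((betaPrimePoly α β N).eval t * (1 + t) ^ j) =
      (ascPochhammer ℝ N).eval (-j : ℝ) * (Gamma α * Gamma (β - N - j) / Gamma (α + β - j)) := by
  have hlj {l : ℕ} (hl : l ∈ range (N + 1)) : (l + j : ℝ) < β := by
    have : (l : ℝ) ≤ N := mod_cast mem_range_succ_iff.1 hl
    linarith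
  have hasc (l : ℕ) : (ascPochhammer ℝ l).eval α ≠ 0 := (ascPochhammer_pos l α hα).ne'
  have hvand := sum_choose_mul_ascPochhammer_mul_Gamma (N - β) (y := β - N - j) (by linarith) N
  rw [show N - β + (β - N - j) = -j by ring] at hvand
  simp only [eval_betaPrimePoly, sum_mul, mul_sum]
  calc
    _ = ∑ l ∈ range (N + 1),
          N.choose l * (ascPochhammer ℝ l).eval (N - β) / (ascPochhammer ℝ l).eval α *
            beta (α + l) (β - l - j) := by
      rw [integral_finsetSum]
      · refine sum_congr rfl fun l hl => ?_
        rw [← integral_betaPrimeWeight_mul_pow_mul_pow hα (hlj hl), ← integral_const_mul]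
        congr with t
        ring
      · intro l hl
        refine ((integrableOn_betaPrimeWeight_mul_pow_mul_pow hα (hlj hl)).const_mul
          (N.choose l * (ascPochhammer ℝ l).eval (N - β) / (ascPochhammer ℝ l).eval α)).congr
          (.of_forall fun t => ?_)
        ring
    _ = ∑ l ∈ range (N + 1), N.choose l * (ascPochhammer ℝ l).eval (N - β) *
          Gamma (β - N - j + (N - l)) * (Gamma α / Gamma (α + β - j)) := by
      refine sum_congr rfl fun l _ => ?_
      rw [beta, Gamma_add_natCast fun _ _ => by positivity,
        show α + l + (β - l - j) = α + β - j by ring,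
        show β - N - j + (N - l) = β - l - j by ring]
      field_simp [hasc l]
    _ = _ := by
      rw [← sum_mul, hvand]
      ring

theorem coeff_taylor_of_natDegree_le {R : Type*} [CommRing R] {P : R[X]} {N : ℕ}
    (hP : P.natDegree ≤ N) (r : R) : (taylor r P).coeff N = P.coeff N := by
  rcases hP.eq_or_lt with rfl | hlt
  · rw [coeff_taylor_natDegree, leadingCoeff]
  · rw [coeff_eq_zero_of_natDegree_lt hlt,
      coeff_eq_zero_of_natDegree_lt ((natDegree_taylor P r).trans_lt hlt)]

theorem eval_eq_sum_coeff_taylor {R : Type*} [CommRing R] (P : R[X]) (r x : R) :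
    P.eval x = ∑ i ∈ range (P.natDegree + 1), (taylor r P).coeff i * (x - r) ^ i := by
  nth_rw 1 [← sum_taylor_eq P r]
  rw [sum_over_range _ fun _ => by simp, natDegree_taylor]
  simp [eval_finsetSum]

theorem ascPochhammer_eval_neg_self {R : Type*} [Ring R] (N : ℕ) :
    (ascPochhammer R N).eval (-N : R) = (-1) ^ N * N.factorial := by
  rw [ascPochhammer_eval_neg_eq_descPochhammer, descPochhammer_eval_eq_descFactorial,
    Nat.descFactorial_self]

theorem integral_betaPrimeWeight_mul_betaPrimePoly_mul {α β : ℝ} (hα : 0 < α) {N : ℕ} {P : ℝ[X]}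
    (hP : P.natDegree ≤ N) (h : (N + P.natDegree : ℝ) < β) :
    ∫ t in Set.Ioi 0, betaPrimeWeight α β t * ((betaPrimePoly α β N).eval t * P.eval t) =
      P.coeff N * ((-1) ^ N * N.factorial *
        (Gamma α * Gamma (β - 2 * N) / Gamma (α + β - N))) := by
  have hNj {j : ℕ} (hj : j ∈ range (P.natDegree + 1)) : (N + j : ℝ) < β := by
    have : (j : ℝ) ≤ P.natDegree := mod_cast mem_range_succ_iff.1 hj
    linarith
  calc
    _ = ∑ j ∈ range (P.natDegree + 1), (taylor (-1) P).coeff j *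
          ((ascPochhammer ℝ N).eval (-j : ℝ) *
            (Gamma α * Gamma (β - N - j) / Gamma (α + β - j))) := by
      simp only [eval_eq_sum_coeff_taylor P (-1), mul_sum, sub_neg_eq_add, add_comm _ (1 : ℝ)]
      rw [integral_finsetSum]
      · refine sum_congr rfl fun j hj => ?_
        rw [← integral_betaPrimeWeight_mul_betaPrimePoly_mul_pow hα (hNj hj), ← integral_const_mul]
        congr with t
        ring
      · intro j hj
        have hdeg := natDegree_mul_le_of_le (natDegree_betaPrimePoly_le α β N)
          (natDegree_C_mul_le ((taylor (-1) P).coeff j) ((X + C 1) ^ j))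
        rw [natDegree_pow_X_add_C] at hdeg
        refine (integrableOn_betaPrimeWeight_mul_eval hα
          ((Nat.cast_le.2 hdeg).trans_lt (mod_cast hNj hj))).congr (.of_forall fun t => ?_)
        simp [add_comm]
    _ = (taylor (-1) P).coeff N * ((ascPochhammer ℝ N).eval (-N : ℝ) *
          (Gamma α * Gamma (β - N - N) / Gamma (α + β - N))) := by
      refine sum_eq_single N (fun j hj hjN => ?_) fun hN => ?_
      · have : j < N := lt_of_le_of_ne ((mem_range_succ_iff.1 hj).trans hP) hjN
        rw [ascPochhammer_eval_neg_coe_nat_of_lt this, zero_mul, mul_zero]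
      · rw [coeff_taylor_of_natDegree_le hP, coeff_eq_zero_of_natDegree_lt, zero_mul]
        simpa [Nat.lt_succ_iff] using hN
    _ = _ := by
      rw [coeff_taylor_of_natDegree_le hP, ascPochhammer_eval_neg_self]
      ring_nf

/-- The monic multiple of `betaPrimePoly α β N`; it is `0` when `betaPrimePoly α β N` has degree
less than `N`. -/
noncomputable def monicBetaPrimePoly (α β : ℝ) (N : ℕ) : ℝ[X] :=
  C ((betaPrimePoly α β N).coeff N)⁻¹ * betaPrimePoly α β N

theorem natDegree_monicBetaPrimePoly_le (α β : ℝ) (N : ℕ) :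
    (monicBetaPrimePoly α β N).natDegree ≤ N :=
  (natDegree_C_mul_le _ _).trans (natDegree_betaPrimePoly_le α β N)

theorem eval_monicBetaPrimePoly (α β : ℝ) (N : ℕ) (t : ℝ) : (monicBetaPrimePoly α β N).eval t =
    ((betaPrimePoly α β N).coeff N)⁻¹ * (betaPrimePoly α β N).eval t := by
  rw [monicBetaPrimePoly, eval_C_mul]

theorem integral_betaPrimeWeight_mul_monicBetaPrimePoly_mul {α β : ℝ} (hα : 0 < α) {N : ℕ}
    {P : ℝ[X]} (hP : P.natDegree ≤ N) (h : (N + P.natDegree : ℝ) < β) :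
    ∫ t in Set.Ioi 0, betaPrimeWeight α β t * ((monicBetaPrimePoly α β N).eval t * P.eval t) =
      ((betaPrimePoly α β N).coeff N)⁻¹ * (P.coeff N * ((-1) ^ N * N.factorial *
        (Gamma α * Gamma (β - 2 * N) / Gamma (α + β - N)))) := by
  rw [← integral_betaPrimeWeight_mul_betaPrimePoly_mul hα hP h, ← integral_const_mul]
  congr with t
  rw [eval_monicBetaPrimePoly]
  ring

theorem integral_betaPrimeWeight_mul_monicBetaPrimePoly_mul_of_lt {α β : ℝ} (hα : 0 < α) {N M : ℕ}
    (hMN : M < N) (h : (N + M : ℝ) < β) :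
    ∫ t in Set.Ioi 0, betaPrimeWeight α β t *
      ((monicBetaPrimePoly α β N).eval t * (monicBetaPrimePoly α β M).eval t) = 0 := by
  have hdeg := natDegree_monicBetaPrimePoly_le α β M
  have hdeg' : ((monicBetaPrimePoly α β M).natDegree : ℝ) ≤ M := mod_cast hdeg
  rw [integral_betaPrimeWeight_mul_monicBetaPrimePoly_mul hα (hdeg.trans hMN.le) (by linarith),
    coeff_eq_zero_of_natDegree_lt (hdeg.trans_lt hMN), zero_mul, mul_zero]

theorem integral_betaPrimeWeight_mul_monicBetaPrimePoly_mul_of_ne {α β : ℝ} (hα : 0 < α) {N M : ℕ}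
    (hNM : N ≠ M) (h : (N + M : ℝ) < β) :
    ∫ t in Set.Ioi 0, betaPrimeWeight α β t *
      ((monicBetaPrimePoly α β N).eval t * (monicBetaPrimePoly α β M).eval t) = 0 := by
  rcases hNM.lt_or_gt with hlt | hlt
  · simp only [mul_comm ((monicBetaPrimePoly α β N).eval _)]
    exact integral_betaPrimeWeight_mul_monicBetaPrimePoly_mul_of_lt hα hlt (by linarith)
  · exact integral_betaPrimeWeight_mul_monicBetaPrimePoly_mul_of_lt hα hlt h

/-- The squared norm of `monicBetaPrimePoly α β N` with respect to `betaPrimeWeight α β`, in closed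
form. -/
noncomputable def betaPrimeSqNorm (α β : ℝ) (N : ℕ) : ℝ :=
  N.factorial * Gamma (α + N) * Gamma (β - 2 * N) * Gamma (β - 2 * N + 1) /
    (Gamma (β - N + 1) * Gamma (α + β - N))

theorem ascPochhammer_eval_natCast_sub {R : Type*} [Ring R] (x : R) (N : ℕ) :
    (ascPochhammer R N).eval (N - x) = (-1) ^ N * (ascPochhammer R N).eval (x - 2 * N + 1) := by
  rw [← neg_sub, ascPochhammer_eval_neg_eq_descPochhammer, descPochhammer_eval_eq_ascPochhammer,
    two_mul, sub_sub]

theorem integral_betaPrimeWeight_mul_monicBetaPrimePoly_mul_self {α β : ℝ} (hα : 0 < α) {N : ℕ}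
    (h : 2 * N < β) :
    ∫ t in Set.Ioi 0, betaPrimeWeight α β t *
      ((monicBetaPrimePoly α β N).eval t * (monicBetaPrimePoly α β N).eval t) =
        betaPrimeSqNorm α β N := by
  have hdeg := natDegree_monicBetaPrimePoly_le α β N
  have hdeg' : ((monicBetaPrimePoly α β N).natDegree : ℝ) ≤ N := mod_cast hdeg
  have hβ : 0 < β - 2 * N := by linarith
  have hα0 : (ascPochhammer ℝ N).eval α ≠ 0 := (ascPochhammer_pos N _ hα).ne'
  have hβ0 : (ascPochhammer ℝ N).eval (β - 2 * N + 1) ≠ 0 :=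
    (ascPochhammer_pos N _ (by positivity)).ne'
  have hcoeff : (betaPrimePoly α β N).coeff N =
      (-1) ^ N * (ascPochhammer ℝ N).eval (β - 2 * N + 1) / (ascPochhammer ℝ N).eval α := by
    rw [coeff_betaPrimePoly_self, ascPochhammer_eval_natCast_sub]
  have hmonic : (monicBetaPrimePoly α β N).coeff N = 1 := by
    rw [monicBetaPrimePoly, coeff_C_mul, inv_mul_cancel₀]
    rw [hcoeff]
    positivity
  rw [integral_betaPrimeWeight_mul_monicBetaPrimePoly_mul hα hdeg (by linarith), hmonic, hcoeff,
    betaPrimeSqNorm, Gamma_add_natCast fun _ _ => by positivity,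
    show β - N + 1 = β - 2 * N + 1 + N by ring, Gamma_add_natCast fun _ _ => by positivity]
  have : Gamma (β - 2 * N + 1) ≠ 0 := (Gamma_pos_of_pos (by positivity)).ne'
  field_simp

theorem betaPrimeSqNorm_zero {β : ℝ} (α : ℝ) (hβ : 0 < β) :
    betaPrimeSqNorm α β 0 = beta α β := by
  have : Gamma (β + 1) ≠ 0 := (Gamma_pos_of_pos (by positivity)).ne'
  simp only [betaPrimeSqNorm, beta, Nat.factorial_zero, Nat.cast_zero, Nat.cast_one, one_mul,
    mul_zero, add_zero, sub_zero]
  field_simp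

theorem Gamma_eq_sub_one_mul {x : ℝ} (hx : x ≠ 1) : Gamma x = (x - 1) * Gamma (x - 1) := by
  rw [← Gamma_add_one (sub_ne_zero.2 hx), sub_add_cancel]

theorem betaPrimeSqNorm_add_one_sub_one {α β : ℝ} (hα : 0 < α) {N : ℕ} (h : 2 * N + 1 < β) :
    betaPrimeSqNorm (α + 1) (β - 1) N =
      (α + N) * (β - N) / ((β - 2 * N) * (β - 2 * N - 1)) * betaPrimeSqNorm α β N := by
  have hβN : β - N ≠ 0 := by linarith
  obtain ⟨γ, hγ⟩ : ∃ γ, γ = β - 2 * N := ⟨_, rfl⟩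
  have hγ0 : γ ≠ 0 := by linarith
  have hγ1 : γ - 1 ≠ 0 := by linarith
  rw [betaPrimeSqNorm, betaPrimeSqNorm, add_right_comm α, sub_right_comm β 1,
    sub_right_comm β 1, sub_add_cancel, sub_add_cancel, add_add_sub_cancel, ← hγ,
    Gamma_add_one (by positivity : α + N ≠ 0), Gamma_add_one hγ0, Gamma_add_one hβN,
    Gamma_eq_sub_one_mul (sub_ne_zero.1 hγ1)]
  field_simp

theorem betaPrimeSqNorm_succ {α β : ℝ} {N : ℕ} (hβ : 2 * N + 2 < β) (hαβ : N + 1 < α + β) :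
    betaPrimeSqNorm α β (N + 1) =
      (N + 1) * (α + β - N - 1) / ((β - 2 * N - 1) * (β - 2 * N - 2)) *
        betaPrimeSqNorm (α + 1) (β - 1) N := by
  obtain ⟨γ, hγ⟩ : ∃ γ, γ = β - 2 * N - 2 := ⟨_, rfl⟩
  obtain ⟨δ, hδ⟩ : ∃ δ, δ = α + β - N - 1 := ⟨_, rfl⟩
  have hγ0 : γ ≠ 0 := by linarith
  have hγ1 : γ + 1 ≠ 0 := by linarith
  have hδ0 : δ ≠ 0 := by linarith
  rw [betaPrimeSqNorm, betaPrimeSqNorm, Nat.factorial_succ, add_add_sub_cancel]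
  push_cast
  rw [show α + (N + 1 : ℝ) = α + 1 + N by ring, show β - 2 * (N + 1 : ℝ) = γ by rw [hγ]; ring,
    show β - (N + 1 : ℝ) + 1 = β - 1 - N + 1 by ring,
    show α + β - (N + 1 : ℝ) = δ by rw [hδ]; ring, show β - 1 - 2 * N = γ + 1 by rw [hγ]; ring,
    show α + β - N = δ + 1 by rw [hδ]; ring, show β - 2 * N - 1 = γ + 1 by rw [hγ]; ring,
    ← hγ, add_sub_cancel_right, Gamma_add_one hγ1, Gamma_add_one hγ0, Gamma_add_one hδ0]
  field_simp

/-- The coefficient `C_{i+1}` of the recurrence `S̄_{i+2} = x S̄_{i+1} + C_{i+1} S̄_i` satisfied by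
the polynomials `S̄_n(1,1,-2a-2b+2,-2a;x)`; minus it is the ratio of the squared norms of `S̄_{i+1}`
and `S̄_i`. -/
noncomputable def recurrenceCoeff (a b : ℝ) (i : ℕ) : ℝ :=
  ((((i : ℝ) + 1) - (1 - (-1 : ℝ) ^ (i + 1)) * a)
      * (((i : ℝ) + 1) - (1 - (-1 : ℝ) ^ (i + 1)) * a - 2 * b)) /
    ((2 * ((i : ℝ) + 1) - 2 * a - 2 * b + 1)
      * (2 * ((i : ℝ) + 1) - 2 * a - 2 * b - 1))

theorem neg_recurrenceCoeff_two_mul (a b : ℝ) (N : ℕ) : -recurrenceCoeff a b (2 * N) =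
    (1 / 2 - a + N) * (a + b - 1 / 2 - N) /
      ((a + b - 1 / 2 - 2 * N) * (a + b - 1 / 2 - 2 * N - 1)) := by
  rw [recurrenceCoeff, (odd_two_mul_add_one N).neg_one_pow, ← neg_div]
  refine .trans ?_ (mul_div_mul_left _ _ (four_ne_zero' ℝ))
  push_cast
  congr 1 <;> ring

theorem neg_recurrenceCoeff_two_mul_add_one (a b : ℝ) (N : ℕ) :
    -recurrenceCoeff a b (2 * N + 1) =
      (N + 1) * (1 / 2 - a + (a + b - 1 / 2) - N - 1) /
        ((a + b - 1 / 2 - 2 * N - 1) * (a + b - 1 / 2 - 2 * N - 2)) := by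
  rw [recurrenceCoeff, (odd_two_mul_add_one N).add_one.neg_one_pow, ← neg_div]
  refine .trans ?_ (mul_div_mul_left _ _ (four_ne_zero' ℝ))
  push_cast
  congr 1 <;> ring

theorem prod_neg_recurrenceCoeff_two_mul_mul_beta {a b : ℝ} (ha : a < 1 / 2) {N : ℕ}
    (h : 2 * N < a + b - 1 / 2) :
    (∏ i ∈ range (2 * N), -recurrenceCoeff a b i) * beta (1 / 2 - a) (a + b - 1 / 2) =
      betaPrimeSqNorm (1 / 2 - a) (a + b - 1 / 2) N := by
  induction N with
  | zero =>
    rw [betaPrimeSqNorm_zero _ (by simpa using h)]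
    simp
  | succ N ih =>
    push_cast at h
    rw [betaPrimeSqNorm_succ (by linarith) (by linarith),
      betaPrimeSqNorm_add_one_sub_one (by linarith) (by linarith), ← ih (by linarith), mul_add_one,
      prod_range_succ, prod_range_succ, neg_recurrenceCoeff_two_mul,
      neg_recurrenceCoeff_two_mul_add_one]
    ring

theorem prod_neg_recurrenceCoeff_mul_beta {a b : ℝ} (ha : a < 1 / 2) {N e : ℕ} (he : e < 2)
    (h : 2 * N + e < a + b - 1 / 2) :
    (∏ i ∈ range (2 * N + e), -recurrenceCoeff a b i) * beta (1 / 2 - a) (a + b - 1 / 2) =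
      betaPrimeSqNorm (1 / 2 - a + e) (a + b - 1 / 2 - e) N := by
  interval_cases e
  · simpa using prod_neg_recurrenceCoeff_two_mul_mul_beta ha (by simpa using h)
  · rw [Nat.cast_one] at *
    rw [betaPrimeSqNorm_add_one_sub_one (by linarith) h,
      ← prod_neg_recurrenceCoeff_two_mul_mul_beta ha (by linarith), prod_range_succ,
      neg_recurrenceCoeff_two_mul]
    ring

theorem integral_abs_rpow_mul_comp_sq (α : ℝ) (f : ℝ → ℝ) :
    ∫ x : ℝ, |x| ^ (2 * α - 1) * f (x ^ 2) = ∫ t in Set.Ioi 0, t ^ (α - 1) * f t := by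
  calc
    _ = ∫ x : ℝ, |x| ^ (2 * α - 1) * f (|x| ^ 2) := by simp only [sq_abs]
    _ = ∫ x in Set.Ioi 0, 2 * (x ^ (2 * α - 1) * f (x ^ 2)) := by
      rw [integral_comp_abs (f := fun x => x ^ (2 * α - 1) * f (x ^ 2)), integral_const_mul]
    _ = ∫ x in Set.Ioi 0,
          (2 * x ^ ((2 : ℝ) - 1)) • ((x ^ (2 : ℝ)) ^ (α - 1) * f (x ^ (2 : ℝ))) := by
      refine setIntegral_congr_fun measurableSet_Ioi fun x (hx : 0 < x) => ?_
      rw [smul_eq_mul, mul_assoc, ← mul_assoc (x ^ _) (_ ^ (α - 1)), ← rpow_mul hx.le,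
        ← rpow_add hx, rpow_two, show (2 : ℝ) - 1 + 2 * (α - 1) = 2 * α - 1 by ring]
    _ = _ := integral_comp_rpow_Ioi_of_pos (g := fun t => t ^ (α - 1) * f t) two_pos

theorem integral_eq_zero_of_odd {G E : Type*} [MeasurableSpace G] [AddGroup G] [MeasurableNeg G]
    [NormedAddCommGroup E] [NormedSpace ℝ E] {μ : Measure G} [μ.IsNegInvariant] {f : G → E}
    (hf : ∀ x, f (-x) = -f x) : ∫ x, f x ∂μ = 0 := by
  have : IsAddTorsionFree E := .of_isTorsionFree ℝ E
  rw [← self_eq_neg, ← integral_neg, ← integral_neg_eq_self]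
  simp only [hf]

theorem ascPochhammer_eval_eq_prod_range {R : Type*} [CommSemiring R] (n : ℕ) (x : R) :
    (ascPochhammer R n).eval x = ∏ i ∈ range n, (x + i) := by
  induction n with
  | zero => simp
  | succ n ih => rw [ascPochhammer_succ_eval, ih, prod_range_succ]

theorem Sbar_neg (p q r s : ℝ) (n : ℕ) (x : ℝ) :
    Sbar p q r s n (-x) = (-1) ^ n * Sbar p q r s n x := by
  rw [Sbar, Sbar, mul_left_comm, S, S]
  congr 1
  rw [mul_sum]
  refine sum_congr rfl fun k hk => ?_
  have hk : 2 * k ≤ n := by grind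
  have hsign : (-1 : ℝ) ^ (n - 2 * k) = (-1) ^ n := by
    rw [← pow_sub_mul_pow _ hk, (even_two_mul k).neg_one_pow, mul_one]
  rw [neg_pow x, hsign]
  ring

theorem integral_mul_Sbar_mul_Sbar_of_odd_add {w : ℝ → ℝ} (hw : ∀ x, w (-x) = w x)
    (p q r s : ℝ) {n m : ℕ} (h : Odd (n + m)) :
    ∫ x, w x * Sbar p q r s n x * Sbar p q r s m x = 0 := by
  refine integral_eq_zero_of_odd fun x => ?_
  have hsign : (-1 : ℝ) ^ n * (-1) ^ m = -1 := by rw [← pow_add, h.neg_one_pow]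
  rw [hw, Sbar_neg, Sbar_neg]
  linear_combination w x * Sbar p q r s n x * Sbar p q r s m x * hsign

theorem Sbar_two_mul_add (a b : ℝ) (N : ℕ) {e : ℕ} (he : e < 2) (x : ℝ) :
    Sbar 1 1 (-2 * a - 2 * b + 2) (-2 * a) (2 * N + e) x =
      x ^ e * (monicBetaPrimePoly (1 / 2 - a + e) (a + b - 1 / 2 - e) N).eval (x ^ 2) := by
  have hdiv : (2 * N + e) / 2 = N := by omega
  have hsign : (-1 : ℝ) ^ (2 * N + e + 1) = 2 * e - 1 := by
    rw [pow_succ, pow_add, pow_mul]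
    interval_cases e <;> norm_num
  have hr (i : ℕ) : (2 * (i : ℝ) + (2 * e - 1) + 2 * N) * 1 + (-2 * a - 2 * b + 2) =
      2 * (N - (a + b - 1 / 2 - e) + i) := by ring
  have hs (i : ℕ) : (2 * (i : ℝ) + (2 * e - 1) + 2) * 1 + -2 * a = 2 * (1 / 2 - a + e + i) := by
    ring
  rw [Sbar, S, hdiv, hsign]
  simp only [hr, hs, mul_div_mul_left _ _ (two_ne_zero' ℝ), prod_div_distrib,
    ← ascPochhammer_eval_eq_prod_range]
  rw [eval_monicBetaPrimePoly, coeff_betaPrimePoly_self, inv_div, mul_left_comm,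
    eval_betaPrimePoly]
  congr 1
  rw [mul_sum, ← sum_range_reflect]
  refine sum_congr rfl fun l hl => ?_
  have hl : l ≤ N := mem_range_succ_iff.1 hl
  rw [add_tsub_cancel_right, Nat.sub_sub_self hl, Nat.choose_symm hl,
    show 2 * N + e - 2 * (N - l) = e + 2 * l by omega]
  ring

theorem integral_weight_mul_Sbar_mul_Sbar (a b : ℝ) (N M : ℕ) {e : ℕ} (he : e < 2) :
    ∫ x : ℝ, |x| ^ (-2 * a) * (1 + x ^ 2) ^ (-b) *
      Sbar 1 1 (-2 * a - 2 * b + 2) (-2 * a) (2 * N + e) x *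
      Sbar 1 1 (-2 * a - 2 * b + 2) (-2 * a) (2 * M + e) x =
    ∫ t in Set.Ioi 0, betaPrimeWeight (1 / 2 - a + e) (a + b - 1 / 2 - e) t *
      ((monicBetaPrimePoly (1 / 2 - a + e) (a + b - 1 / 2 - e) N).eval t *
        (monicBetaPrimePoly (1 / 2 - a + e) (a + b - 1 / 2 - e) M).eval t) := by
  simp only [betaPrimeWeight, mul_assoc]
  rw [← integral_abs_rpow_mul_comp_sq]
  refine integral_congr_ae ((volume.ae_ne 0).mono fun x hx => ?_)
  simp only [Sbar_two_mul_add a b _ he]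
  rw [show 2 * (1 / 2 - a + e) - 1 = -2 * a + (2 * e : ℕ) by push_cast; ring,
    rpow_add_natCast (abs_ne_zero.2 hx), pow_mul |x|, sq_abs,
    show -(1 / 2 - a + e + (a + b - 1 / 2 - e)) = -b by ring]
  ring

/-- Finite orthogonality of the third subclass `S̄_n(1,1,−2a−2b+2,−2a;·)` with respect to
the weight `|x|^{−2a}(1+x²)^{−b}` on `(−∞,∞)`, valid when `n + m < 2(a+b) − 1`. -/
theorem finite_orthogonality_third_subclass (a b : ℝ) (ha : a < 1 / 2) (hb : 0 < b)
    (n m : ℕ) (hnm : (n : ℝ) + (m : ℝ) < 2 * (a + b) - 1)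
    (hden : ∀ j : ℤ, Odd j → 1 ≤ |j| → |j| ≤ 2 * (max n m : ℤ) + 1 →
      2 * (a + b) - (j : ℝ) ≠ 0) :
    ∫ x : ℝ,
        |x| ^ (-2 * a) * (1 + x ^ 2) ^ (-b) *
          Sbar 1 1 (-2 * a - 2 * b + 2) (-2 * a) n x *
          Sbar 1 1 (-2 * a - 2 * b + 2) (-2 * a) m x =
      (if n = m then (1 : ℝ) else 0) * (-1 : ℝ) ^ n *
        (∏ i ∈ Finset.range n,
          ((((i : ℝ) + 1) - (1 - (-1 : ℝ) ^ (i + 1)) * a)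
              * (((i : ℝ) + 1) - (1 - (-1 : ℝ) ^ (i + 1)) * a - 2 * b)) /
            ((2 * ((i : ℝ) + 1) - 2 * a - 2 * b + 1)
              * (2 * ((i : ℝ) + 1) - 2 * a - 2 * b - 1))) *
        (Real.Gamma (b + a - 1 / 2) * Real.Gamma (1 / 2 - a) / Real.Gamma b) := by
  rcases Nat.even_or_odd (n + m) with hpar | hpar
  · obtain ⟨N, e, he, rfl⟩ : ∃ N e, e < 2 ∧ n = 2 * N + e :=
      ⟨n / 2, n % 2, Nat.mod_lt n two_pos, (Nat.div_add_mod n 2).symm⟩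
    obtain ⟨M, rfl⟩ : ∃ M, m = 2 * M + e := ⟨m / 2, by grind⟩
    have hα : 0 < 1 / 2 - a + e := by linarith [e.cast_nonneg (α := ℝ)]
    push_cast at hnm
    rw [integral_weight_mul_Sbar_mul_Sbar a b N M he]
    rcases eq_or_ne N M with rfl | hNM
    · have hN : 2 * N + e < a + b - 1 / 2 := by linarith
      rw [integral_betaPrimeWeight_mul_monicBetaPrimePoly_mul_self hα (by linarith),
        ← prod_neg_recurrenceCoeff_mul_beta ha he hN, prod_neg, card_range, if_pos rfl, one_mul,
        beta, show 1 / 2 - a + (a + b - 1 / 2) = b by ring, add_comm b,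
        mul_comm (Gamma (1 / 2 - a))]
      simp only [recurrenceCoeff]
    · rw [integral_betaPrimeWeight_mul_monicBetaPrimePoly_mul_of_ne hα hNM (by linarith),
        if_neg (by omega), zero_mul, zero_mul, zero_mul]
  · rw [integral_mul_Sbar_mul_Sbar_of_odd_add (by simp) _ _ _ _ hpar,
      if_neg (by grind), zero_mul, zero_mul, zero_mul]
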